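/- Let a, b be real numbers with b ≠ 0 and let f, g ∈ L¹(ℝ, ℂ). Then the function t ↦ (fΘg)(t) is defined almost everywhere, belongs to L¹(ℝ, ℂ), and satisfies ‖fΘg‖₁ ≤ ‖f‖₁·‖g‖₁. -/

import Mathlib

open MeasureTheory Filter

noncomputable def thKernel (a b : ℝ) (f g : ℝ → ℂ) (t x : ℝ) : ℂ :=
  Complex.exp (-(Complex.I/2) * ((a:ℂ)/(b:ℂ)) * (t:ℂ)^2) *
    Complex.exp ((Complex.I/2) * ((a:ℂ)/(b:ℂ)) * (x:ℂ)^2) * f x *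
    (Complex.exp ((Complex.I/2) * ((a:ℂ)/(b:ℂ)) * ((x:ℂ)-(t:ℂ))^2) * g (x-t) -
     Complex.exp ((Complex.I/2) * ((a:ℂ)/(b:ℂ)) * ((x:ℂ)+(t:ℂ))^2) * g (x+t))

noncomputable def thConv (a b : ℝ) (f g : ℝ → ℂ) (t : ℝ) : ℂ :=
  (1/2 : ℂ) * ∫ x : ℝ, thKernel a b f g t x

/-!
Multiplication by a chirp `exp (i c x² / 2)` preserves `L¹` norms. With `c = a / b`,
`F = chirp c * f` and `G = chirp c * g`, the kernel of `f Θ g` is a unimodular function of `t` times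
`F x * (G (x - t) - G (x + t))`. Each of the two terms is the pullback of the tensor product
`F ⊗ G` under a measure-preserving shear, hence has `L¹` norm at most `‖f‖₁ ‖g‖₁` on the plane;
Fubini gives the claim, the factor `1 / 2` compensating for the two terms.
-/

section Product

variable {α β γ R E : Type*} [MeasurableSpace α] [MeasurableSpace β] [MeasurableSpace γ]
  {μ : Measure α} {ν : Measure β} {ρ : Measure γ}

theorem integral_norm_integral_le_integral_norm_prod [SFinite μ] [SFinite ν]
    [NormedAddCommGroup E] [NormedSpace ℝ E] {F : α × β → E} (hF : Integrable F (μ.prod ν)) :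
    ∫ x, ‖∫ y, F (x, y) ∂ν‖ ∂μ ≤ ∫ z, ‖F z‖ ∂(μ.prod ν) := by
  rw [integral_prod _ hF.norm]
  exact integral_mono hF.integral_prod_left.norm hF.integral_norm_prod_left
    fun x => norm_integral_le_integral_norm _

variable [NormedRing R] {f : α → R} {g : β → R} {φ : γ → α × β}

theorem integrable_mul_comp_of_measurePreserving (hφ : MeasurePreserving φ ρ (μ.prod ν))
    (hf : Integrable f μ) (hg : Integrable g ν) :
    Integrable (fun z => f (φ z).1 * g (φ z).2) ρ :=
  hφ.integrable_comp_of_integrable (hf.mul_prod hg)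

theorem integral_norm_mul_comp_le_of_measurePreserving [SFinite μ] [SFinite ν]
    (hφ : MeasurePreserving φ ρ (μ.prod ν)) (hf : Integrable f μ) (hg : Integrable g ν) :
    ∫ z, ‖f (φ z).1 * g (φ z).2‖ ∂ρ ≤ (∫ x, ‖f x‖ ∂μ) * ∫ y, ‖g y‖ ∂ν := by
  have hfg : Integrable (fun w : α × β => f w.1 * g w.2) (μ.prod ν) := hf.mul_prod hg
  calc ∫ z, ‖f (φ z).1 * g (φ z).2‖ ∂ρ
      = ∫ w, ‖f w.1 * g w.2‖ ∂(μ.prod ν) := by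
        rw [← hφ.map_eq, integral_map hφ.aemeasurable]
        exact hφ.map_eq ▸ hfg.norm.aestronglyMeasurable
    _ ≤ ∫ w, ‖f w.1‖ * ‖g w.2‖ ∂(μ.prod ν) :=
        integral_mono hfg.norm (hf.norm.mul_prod hg.norm) fun w => norm_mul_le _ _
    _ = (∫ x, ‖f x‖ ∂μ) * ∫ y, ‖g y‖ ∂ν :=
        integral_prod_mul (fun x => ‖f x‖) fun y => ‖g y‖

end Product

section OddConvKernel

variable {G R : Type*} [AddGroup G]

/-- The integrand, at `(t, x)`, of the chirp-free convolution `∫ f x * (g (x - t) - g (x + t)) dx`,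
which is odd in `t`. It is defined on `G × G` so that Fubini's theorem applies directly. -/
def oddConvKernel [Ring R] (f g : G → R) (z : G × G) : R :=
  f z.2 * (g (z.2 - z.1) - g (z.2 + z.1))

theorem oddConvKernel_eq_sub [Ring R] (f g : G → R) :
    oddConvKernel f g = fun z => f z.2 * g (z.2 - z.1) - f z.2 * g (z.2 + z.1) :=
  funext fun _ => mul_sub _ _ _

variable [MeasurableSpace G] [MeasurableAdd₂ G] [MeasurableNeg G] {μ ν : Measure G}
  [SFinite μ] [SFinite ν] [μ.IsAddLeftInvariant] [μ.IsNegInvariant]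
  [NormedRing R] {f g : G → R}

variable (μ ν) in
theorem measurePreserving_snd_snd_sub_fst :
    MeasurePreserving (fun z : G × G => (z.2, z.2 - z.1)) (μ.prod ν) (ν.prod μ) := by
  simpa only [Function.comp_def, Prod.map, id, sub_eq_add_neg] using
    (measurePreserving_prod_add_swap μ ν).comp
      ((Measure.measurePreserving_neg μ).prod (MeasurePreserving.id ν))

theorem integrable_oddConvKernel (hf : Integrable f ν) (hg : Integrable g μ) :
    Integrable (oddConvKernel f g) (μ.prod ν) := by
  rw [oddConvKernel_eq_sub]
  exact (integrable_mul_comp_of_measurePreserving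
      (measurePreserving_snd_snd_sub_fst μ ν) hf hg).sub
    (integrable_mul_comp_of_measurePreserving (measurePreserving_prod_add_swap μ ν) hf hg)

theorem integral_norm_oddConvKernel_le (hf : Integrable f ν) (hg : Integrable g μ) :
    ∫ z, ‖oddConvKernel f g z‖ ∂(μ.prod ν) ≤ 2 * ((∫ x, ‖f x‖ ∂ν) * ∫ x, ‖g x‖ ∂μ) := by
  have hsub := measurePreserving_snd_snd_sub_fst μ ν
  have hadd := measurePreserving_prod_add_swap μ ν
  have hfg_sub := (integrable_mul_comp_of_measurePreserving hsub hf hg).norm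
  have hfg_add := (integrable_mul_comp_of_measurePreserving hadd hf hg).norm
  calc ∫ z, ‖oddConvKernel f g z‖ ∂(μ.prod ν)
      ≤ ∫ z, (‖f z.2 * g (z.2 - z.1)‖ + ‖f z.2 * g (z.2 + z.1)‖) ∂(μ.prod ν) := by
        refine integral_mono (integrable_oddConvKernel hf hg).norm (hfg_sub.add hfg_add)
          fun z => ?_
        simpa only [oddConvKernel_eq_sub] using norm_sub_le _ _
    _ = ∫ z, ‖f z.2 * g (z.2 - z.1)‖ ∂(μ.prod ν) + ∫ z, ‖f z.2 * g (z.2 + z.1)‖ ∂(μ.prod ν) :=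
        integral_add hfg_sub hfg_add
    _ ≤ 2 * ((∫ x, ‖f x‖ ∂ν) * ∫ x, ‖g x‖ ∂μ) := by
        rw [two_mul]
        exact add_le_add (integral_norm_mul_comp_le_of_measurePreserving hsub hf hg)
          (integral_norm_mul_comp_le_of_measurePreserving hadd hf hg)

end OddConvKernel

section Chirp

/-- The chirp `x ↦ exp (i c x² / 2)` of rate `c`; the phases in `thKernel` are chirps of rate
`±(a / b)`. The exponent is a cast real multiple of `I`, which makes the modulus visibly `1`. -/
noncomputable def chirp (c x : ℝ) : ℂ :=
  Complex.exp ((c / 2 * x ^ 2 : ℝ) * Complex.I)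

theorem norm_chirp (c x : ℝ) : ‖chirp c x‖ = 1 :=
  Complex.norm_exp_ofReal_mul_I _

theorem norm_chirp_mul (c x : ℝ) (w : ℂ) : ‖chirp c x * w‖ = ‖w‖ := by
  rw [norm_mul, norm_chirp, one_mul]

theorem continuous_chirp (c : ℝ) : Continuous (chirp c) := by
  unfold chirp
  fun_prop

theorem integrable_chirp_comp_mul {α : Type*} [TopologicalSpace α] [MeasurableSpace α]
    [OpensMeasurableSpace α] {μ : Measure α} {h : α → ℝ} {f : α → ℂ} (c : ℝ)
    (hh : Continuous h) (hf : Integrable f μ) :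
    Integrable (fun x => chirp c (h x) * f x) μ :=
  hf.bdd_mul ((continuous_chirp c).comp hh).measurable.aestronglyMeasurable
    (Eventually.of_forall fun x => (norm_chirp c (h x)).le)

theorem integrable_chirp_mul {μ : Measure ℝ} {f : ℝ → ℂ} (c : ℝ) (hf : Integrable f μ) :
    Integrable (chirp c * f) μ :=
  integrable_chirp_comp_mul c continuous_id hf

end Chirp

section ThConv

variable {f g : ℝ → ℂ}

theorem thKernel_eq_chirp_mul_oddConvKernel (a b : ℝ) (f g : ℝ → ℂ) (t x : ℝ) :
    thKernel a b f g t x =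
      chirp (-(a / b)) t * oddConvKernel (chirp (a / b) * f) (chirp (a / b) * g) (t, x) := by
  have exp_eq_chirp (y : ℝ) :
      Complex.exp (Complex.I / 2 * (a / b) * (y : ℂ) ^ 2) = chirp (a / b) y := by
    unfold chirp
    push_cast
    ring_nf
  have exp_neg_eq_chirp :
      Complex.exp (-(Complex.I / 2) * (a / b) * (t : ℂ) ^ 2) = chirp (-(a / b)) t := by
    unfold chirp
    push_cast
    ring_nf
  simp only [thKernel, oddConvKernel, Pi.mul_apply, ← Complex.ofReal_sub, ← Complex.ofReal_add,
    exp_eq_chirp, exp_neg_eq_chirp]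
  ring

theorem norm_thKernel (a b : ℝ) (f g : ℝ → ℂ) (z : ℝ × ℝ) :
    ‖thKernel a b f g z.1 z.2‖ =
      ‖oddConvKernel (chirp (a / b) * f) (chirp (a / b) * g) z‖ := by
  rw [thKernel_eq_chirp_mul_oddConvKernel, norm_chirp_mul]

theorem integrable_thKernel (a b : ℝ) (hf : Integrable f) (hg : Integrable g) :
    Integrable (fun z : ℝ × ℝ => thKernel a b f g z.1 z.2) (volume.prod volume) := by
  simp only [thKernel_eq_chirp_mul_oddConvKernel]
  exact integrable_chirp_comp_mul _ continuous_fst <|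
    integrable_oddConvKernel (integrable_chirp_mul _ hf) (integrable_chirp_mul _ hg)

theorem integral_norm_thKernel_le (a b : ℝ) (hf : Integrable f) (hg : Integrable g) :
    ∫ z : ℝ × ℝ, ‖thKernel a b f g z.1 z.2‖ ∂(volume.prod volume) ≤
      2 * ((∫ x, ‖f x‖) * ∫ x, ‖g x‖) := by
  simpa only [norm_thKernel, Pi.mul_apply, norm_chirp_mul] using
    integral_norm_oddConvKernel_le (integrable_chirp_mul (a / b) hf)
      (integrable_chirp_mul (a / b) hg)

theorem norm_thConv (a b : ℝ) (f g : ℝ → ℂ) (t : ℝ) :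
    ‖thConv a b f g t‖ = 1 / 2 * ‖∫ x, thKernel a b f g t x‖ := by
  simp [thConv]

end ThConv

theorem thConv_memL1 (a b : ℝ) (hb : b ≠ 0) (f g : ℝ → ℂ)
    (hf : Integrable f) (hg : Integrable g) :
    (∀ᵐ t : ℝ, Integrable (fun x => thKernel a b f g t x)) ∧
    Integrable (thConv a b f g) ∧
    (∫ t : ℝ, ‖thConv a b f g t‖) ≤ (∫ t : ℝ, ‖f t‖) * (∫ t : ℝ, ‖g t‖) := by
  have hK := integrable_thKernel a b hf hg
  refine ⟨hK.prod_right_ae, hK.integral_prod_left.const_mul _, ?_⟩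
  calc ∫ t, ‖thConv a b f g t‖
      = 1 / 2 * ∫ t, ‖∫ x, thKernel a b f g t x‖ := by
        simp only [norm_thConv, integral_const_mul]
    _ ≤ 1 / 2 * ∫ z : ℝ × ℝ, ‖thKernel a b f g z.1 z.2‖ ∂(volume.prod volume) := by
        gcongr
        exact integral_norm_integral_le_integral_norm_prod hK
    _ ≤ 1 / 2 * (2 * ((∫ t, ‖f t‖) * ∫ t, ‖g t‖)) := by
        gcongr
        exact integral_norm_thKernel_le a b hf hg
    _ = (∫ t, ‖f t‖) * ∫ t, ‖g t‖ := by ring
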